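/- arXiv:2303.10041 — 4 statements merged into one kernel-verified Lean document; each statement's English description precedes it below -/
import Mathlib

section
/- Let a, b > 0 and define 𝖢_{a,b} := {(φ₁,φ₂) ∈ 𝒞 : φ₁^o = a·(e_a * φ₁) and φ₂^o = b·(e_a * φ₁) identically on ℝ}. Then 𝖢_{a,b} is invariant under the basic Cartesian product cosine family: for every t ∈ ℝ and every (φ₁,φ₂) ∈ 𝖢_{a,b}, the pair C_D(t)(φ₁,φ₂) = (C(t)φ₁, C(t)φ₂) again belongs to 𝖢_{a,b}. -/
/-!
Write `E = e_a * φ₁`. Splitting the convolution integral of a translate gives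
`(e_a * φ₁(· + t))(x) = E(x + t) - e_a(x) E(t)`. Since `a ≠ 0` and `a E` is the odd part of `φ₁`,
`E` is odd, so averaging over `t` and `-t` cancels the boundary terms and
`e_a * C(t)φ₁ = C(t)E`. As `C(t)` is linear and commutes with taking odd parts, it carries
both defining relations over to the new pair.
-/

open Filter Topology MeasureTheory Set intervalIntegral

noncomputable section

/-- `f` belongs to `C[-infty,infty]`: continuous with finite limits at both infinities. -/
def Cinf (f : ℝ → ℝ) : Prop :=
  Continuous f ∧ (∃ L, Tendsto f atTop (nhds L)) ∧ (∃ L, Tendsto f atBot (nhds L))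

/-- odd part of a function -/
def oddPart (f : ℝ → ℝ) : ℝ → ℝ := fun x => (f x - f (-x)) / 2

/-- even part of a function -/
def evenPart (f : ℝ → ℝ) : ℝ → ℝ := fun x => (f x + f (-x)) / 2

/-- the exponential function `e_a(x) = exp(-a x)` -/
def expa (a : ℝ) : ℝ → ℝ := fun x => Real.exp (-(a * x))

/-- the (signed) convolution `(f*g)(x) = ∫_0^x f(x-y) g(y) dy`, for all real `x` -/
def conv (f g : ℝ → ℝ) : ℝ → ℝ := fun x => ∫ y in (0:ℝ)..x, f (x - y) * g y

/-- the basic cosine family `C(t)f(x) = (f(x+t)+f(x-t))/2` -/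
def cosF (t : ℝ) (f : ℝ → ℝ) : ℝ → ℝ := fun x => (f (x + t) + f (x - t)) / 2

lemma Cinf.cosF {f : ℝ → ℝ} (h : Cinf f) (t : ℝ) : Cinf (cosF t f) := by
  obtain ⟨hc, ⟨L, hL⟩, ⟨M, hM⟩⟩ := h
  refine ⟨?_, ⟨(L + L) / 2, ?_⟩, ⟨(M + M) / 2, ?_⟩⟩
  · unfold _root_.cosF
    fun_prop
  · exact ((hL.comp (tendsto_atTop_add_const_right _ t tendsto_id)).add
      (hL.comp (tendsto_atTop_add_const_right _ (-t) tendsto_id))).div_const 2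
  · exact ((hM.comp (tendsto_atBot_add_const_right _ t tendsto_id)).add
      (hM.comp (tendsto_atBot_add_const_right _ (-t) tendsto_id))).div_const 2

lemma oddPart_cosF (f : ℝ → ℝ) (t x : ℝ) :
    oddPart (cosF t f) x = (oddPart f (x + t) + oddPart f (x - t)) / 2 := by
  simp only [oddPart, cosF, show -(x + t) = -x - t by ring, show -(x - t) = -x + t by ring]
  ring

lemma conv_expa_translate (a : ℝ) {f : ℝ → ℝ} (hf : Continuous f) (t x : ℝ) :
    conv (expa a) (fun y => f (y + t)) x
      = conv (expa a) f (x + t) - expa a x * conv (expa a) f t := by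
  have hi : ∀ u v : ℝ, IntervalIntegrable (fun y => expa a (x + t - y) * f y) volume u v := by
    intro u v
    apply Continuous.intervalIntegrable
    unfold expa
    fun_prop
  have hshift : conv (expa a) (fun y => f (y + t)) x
      = ∫ y in t..(x + t), expa a (x + t - y) * f y := by
    have h := intervalIntegral.integral_comp_add_right
      (a := 0) (b := x) (fun y => expa a (x + t - y) * f y) t
    simpa [conv] using h
  have hfactor : expa a x * conv (expa a) f t = ∫ y in (0:ℝ)..t, expa a (x + t - y) * f y := by
    rw [conv, ← intervalIntegral.integral_const_mul]
    congr 1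
    ext y
    rw [← mul_assoc]
    simp only [expa, ← Real.exp_add]
    ring_nf
  rw [hshift, hfactor, conv, ← intervalIntegral.integral_add_adjacent_intervals (hi 0 t) (hi t (x + t))]
  ring

/-- If `e_a * f` is odd, then convolution with `e_a` commutes with the cosine family at `f`. -/
lemma conv_expa_cosF (a : ℝ) {f : ℝ → ℝ} (hf : Continuous f)
    (hodd : ∀ x, conv (expa a) f (-x) = -conv (expa a) f x) (t x : ℝ) :
    conv (expa a) (cosF t f) x
      = (conv (expa a) f (x + t) + conv (expa a) f (x - t)) / 2 := by
  have hi : ∀ s : ℝ, IntervalIntegrable (fun y => expa a (x - y) * f (y + s)) volume 0 x := by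
    intro s
    apply Continuous.intervalIntegrable
    unfold expa
    fun_prop
  have hsplit : conv (expa a) (cosF t f) x
      = (conv (expa a) (fun y => f (y + t)) x + conv (expa a) (fun y => f (y + -t)) x) / 2 := by
    simp only [conv]
    rw [← intervalIntegral.integral_add (hi t) (hi (-t)), ← intervalIntegral.integral_div]
    congr 1
    ext y
    simp only [cosF, ← sub_eq_add_neg]
    ring
  rw [hsplit, conv_expa_translate a hf, conv_expa_translate a hf, hodd t, ← sub_eq_add_neg]
  ring

/-- the subspace `𝖢_{a,b}` is invariant under the basic Cartesian product
cosine family. -/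
theorem statement2 (a b : ℝ) (ha : 0 < a) (hb : 0 < b) (t : ℝ) (φ₁ φ₂ : ℝ → ℝ)
    (h₁ : Cinf φ₁) (h₂ : Cinf φ₂)
    (ho₁ : ∀ x, oddPart φ₁ x = a * conv (expa a) φ₁ x)
    (ho₂ : ∀ x, oddPart φ₂ x = b * conv (expa a) φ₁ x) :
    Cinf (cosF t φ₁) ∧ Cinf (cosF t φ₂) ∧
    (∀ x, oddPart (cosF t φ₁) x = a * conv (expa a) (cosF t φ₁) x) ∧
    (∀ x, oddPart (cosF t φ₂) x = b * conv (expa a) (cosF t φ₁) x) := by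
  have hodd : ∀ x, conv (expa a) φ₁ (-x) = -conv (expa a) φ₁ x := by
    intro x
    have h : oddPart φ₁ (-x) = -oddPart φ₁ x := by
      simp only [oddPart, neg_neg]
      ring
    rw [ho₁, ho₁, ← mul_neg] at h
    exact mul_left_cancel₀ ha.ne' h
  refine ⟨h₁.cosF t, h₂.cosF t, fun x => ?_, fun x => ?_⟩
  · rw [oddPart_cosF, conv_expa_cosF a h₁.1 hodd, ho₁, ho₁]
    ring
  · rw [oddPart_cosF, conv_expa_cosF a h₁.1 hodd, ho₂, ho₂]
    ring
end
end

section
/- Fix α, β ≥ 0 with α + β > 0. For a pair (ψ₁,ψ₂) ∈ 𝒞 the following are equivalent: (i) the identities ψ₁^o = α·e_{α+β}*(ψ₂ − ψ₁^T) and ψ₂^o = β·e_{α+β}*(ψ₂ − ψ₁^T) hold at every x ∈ ℝ; (ii) these two identities hold at every x ≥ 0. -/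
/-!
Write `a = α + β`, `g = ψ₂ - ψ₁^T` and `G = e_a * g`. Since the odd parts of `ψ₁` and `ψ₂` are odd,
the identities pass from `x ≥ 0` to all `x` as soon as `G` is odd. Adding the two identities gives
`g^o = ψ₁^o + ψ₂^o = a G` on the nonnegative half-line. As `G' = g - a G` everywhere
(`hasDerivAt_conv_expa`), the defect `D(x) = G(-x) + G(x)` satisfies, for `x ≥ 0`,
`D'(x) = 2 g^o(x) + a G(-x) - a G(x) = a D(x)` with `D(0) = 0`, so `D = 0` (`conv_expa_neg`).
-/

open Filter Topology MeasureTheory Set intervalIntegral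

noncomputable section

/-- `G = e_a * g` solves the linear equation `G' = g - a G` on all of `ℝ`. -/
lemma hasDerivAt_conv_expa (a : ℝ) (g : ℝ → ℝ) (hg : Continuous g) (x : ℝ) :
    HasDerivAt (conv (expa a) g) (g x - a * conv (expa a) g x) x := by
  have hfactor : ∀ z, conv (expa a) g z
      = Real.exp (-(a * z)) * ∫ y in (0:ℝ)..z, Real.exp (a * y) * g y := by
    intro z
    unfold conv expa
    rw [← intervalIntegral.integral_const_mul]
    congr 1
    ext y
    rw [← mul_assoc, ← Real.exp_add]
    ring_nf
  have hcont : Continuous fun y => Real.exp (a * y) * g y := by fun_prop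
  have hint : HasDerivAt (fun z => ∫ y in (0:ℝ)..z, Real.exp (a * y) * g y)
      (Real.exp (a * x) * g x) x :=
    intervalIntegral.integral_hasDerivAt_right (hcont.intervalIntegrable _ _)
      (hcont.stronglyMeasurableAtFilter _ _) hcont.continuousAt
  have hexp : HasDerivAt (fun z => Real.exp (-(a * z))) (Real.exp (-(a * x)) * (-(a * 1))) x :=
    (((hasDerivAt_id x).const_mul a).neg).exp
  rw [funext hfactor]
  refine (hexp.mul hint).congr_deriv ?_
  beta_reduce
  have hone : Real.exp (-(a * x)) * Real.exp (a * x) = 1 := by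
    rw [← Real.exp_add]; simp
  linear_combination g x * hone

/-- If `g^o = a (e_a * g)` on the nonnegative half-line, then `G = e_a * g` is odd: the defect
`D(x) = G(-x) + G(x)` solves `D' = a D`, `D(0) = 0` on that half-line. -/
lemma conv_expa_neg (a : ℝ) (g : ℝ → ℝ) (hg : Continuous g)
    (h : ∀ x, 0 ≤ x → g x - g (-x) = 2 * (a * conv (expa a) g x)) (x : ℝ) (hx : 0 ≤ x) :
    conv (expa a) g (-x) = -conv (expa a) g x := by
  set G := conv (expa a) g with hG
  have hG' : ∀ z, HasDerivAt G (g z - a * G z) z := hasDerivAt_conv_expa a g hg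
  have hderiv : ∀ z, 0 ≤ z →
      HasDerivAt (fun z => Real.exp (-(a * z)) * (G (-z) + G z)) 0 z := by
    intro z hz
    have hexp : HasDerivAt (fun z => Real.exp (-(a * z))) (Real.exp (-(a * z)) * (-(a * 1))) z :=
      (((hasDerivAt_id z).const_mul a).neg).exp
    have hneg : HasDerivAt (fun z => G (-z)) ((g (-z) - a * G (-z)) * (-1)) z :=
      (hG' (-z)).comp z (hasDerivAt_neg z)
    refine (hexp.mul (hneg.add (hG' z))).congr_deriv ?_
    simp only [Pi.add_apply]
    linear_combination Real.exp (-(a * z)) * h z hz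
  have hconst := constant_of_has_deriv_right_zero (a := 0) (b := x)
    (fun z hz => (hderiv z hz.1).continuousAt.continuousWithinAt)
    (fun z hz => (hderiv z hz.1).hasDerivWithinAt) x ⟨hx, le_rfl⟩
  have hzero : G 0 = 0 := by simp [hG, conv]
  simp only [neg_zero, hzero, add_zero, mul_zero, mul_eq_zero, Real.exp_ne_zero, false_or]
    at hconst
  linarith

/-- for pairs in `𝒞`, the defining identities of `𝒞_{α,β}` hold on all of `ℝ`
iff they hold on `ℝ⁺`. -/
theorem statement3 (α β : ℝ) (hα : 0 ≤ α) (hβ : 0 ≤ β) (hαβ : 0 < α + β)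
    (ψ₁ ψ₂ : ℝ → ℝ) (h₁ : Cinf ψ₁) (h₂ : Cinf ψ₂) :
    ((∀ x : ℝ, oddPart ψ₁ x = α * conv (expa (α + β)) (fun y => ψ₂ y - ψ₁ (-y)) x) ∧
     (∀ x : ℝ, oddPart ψ₂ x = β * conv (expa (α + β)) (fun y => ψ₂ y - ψ₁ (-y)) x)) ↔
    ((∀ x : ℝ, 0 ≤ x → oddPart ψ₁ x = α * conv (expa (α + β)) (fun y => ψ₂ y - ψ₁ (-y)) x) ∧
     (∀ x : ℝ, 0 ≤ x → oddPart ψ₂ x = β * conv (expa (α + β)) (fun y => ψ₂ y - ψ₁ (-y)) x)) := by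
  refine ⟨fun h => ⟨fun x _ => h.1 x, fun x _ => h.2 x⟩, fun ⟨hp, hq⟩ => ?_⟩
  have hg : Continuous fun y => ψ₂ y - ψ₁ (-y) := h₂.1.sub (h₁.1.comp continuous_neg)
  have hodd := conv_expa_neg (α + β) _ hg (fun x hx => by
    have e₁ := hp x hx
    have e₂ := hq x hx
    simp only [oddPart] at e₁ e₂
    simp only [neg_neg]
    linear_combination 2 * e₁ + 2 * e₂)
  have hflip : ∀ (ψ : ℝ → ℝ) (x : ℝ), oddPart ψ x = -oddPart ψ (-x) := by
    intro ψ x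
    simp only [oddPart, neg_neg]
    ring
  constructor <;> intro x <;> rcases le_total 0 x with hx | hx
  · exact hp x hx
  · have hx' : 0 ≤ -x := neg_nonneg.mpr hx
    have e := hodd (-x) hx'
    rw [neg_neg] at e
    rw [hflip, hp _ hx', e]
    ring
  · exact hq x hx
  · have hx' : 0 ≤ -x := neg_nonneg.mpr hx
    have e := hodd (-x) hx'
    rw [neg_neg] at e
    rw [hflip, hq _ hx', e]
    ring
end
end

section
/- Fix α, β ≥ 0 with α + β > 0. For every (f₁,f₂) ∈ 𝒞, the pair (f₁ − g₁, f₂ − g₂), where (g₁,g₂) = P_{α,β}(f₁,f₂), belongs to 𝒟_{α,β}. -/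
/-!
Put `γ = gam α β` and `u = k₁ + (γ/2) k₂`, so that `k₁ = uᵒ`, and let `U` be the bounded solution of
`U' = γ U - u`, that is `U x = e^{γx} (c - ∫₀ˣ e^{-γy} u y dy) = ∫₀^∞ e^{-γt} u (x + t) dt`.
The second formula and dominated convergence show that `U` has limits at `±∞` (`cinf_Ufun`).

Expanding `sinh` and `cosh` in the convolutions defining `P_{α,β}` and using `k₁` odd, `k₂` even,
`f₁ - g₁ = f₁ᵒ + Uᵉ - (2α/γ) Uᵒ` and `f₂ - g₂ = f₂ᵒ - Uᵉ - (2β/γ) Uᵒ`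
(`sub_Pone_eq`, `sub_Ptwo_eq`). Hence both differences lie in `C[-∞,∞]`, their even parts are
`Uᵉ` and `-Uᵉ`, and since `2(α² + β²)/γ = γ` the function convolved with `e_{α+β}` in the definition
of `𝒟_{α,β}` equals `k₁ - γ Uᵒ - (α+β) Uᵉ = -((Uᵉ)' + (α+β) Uᵉ)`. Variation of constants
(`conv_expa_deriv_add`) with `Uᵉ(0) = c` then gives the two identities.
-/

open Filter Topology MeasureTheory Set intervalIntegral

noncomputable section

/-- membership in the complementary subspace `𝒟_{α,β}` of `𝒞` -/
def memDab (α β : ℝ) (g₁ g₂ : ℝ → ℝ) : Prop :=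
  Cinf g₁ ∧ Cinf g₂ ∧
  (∀ x, evenPart g₁ x =
    -(g₂ 0) * expa (α + β) x - conv (expa (α + β)) (fun y => β * g₂ y - α * g₁ (-y)) x) ∧
  (∀ x, evenPart g₂ x =
    g₂ 0 * expa (α + β) x + conv (expa (α + β)) (fun y => β * g₂ y - α * g₁ (-y)) x)

/-- `γ = sqrt(2(α²+β²))` -/
def gam (α β : ℝ) : ℝ := Real.sqrt (2 * (α ^ 2 + β ^ 2))

/-- `k₁ = α f₁ᵒ + β f₂ᵒ` -/
def kone (α β : ℝ) (f₁ f₂ : ℝ → ℝ) : ℝ → ℝ := fun x => α * oddPart f₁ x + β * oddPart f₂ x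

/-- `k₂ = f₁ᵉ - f₂ᵉ` -/
def ktwo (f₁ f₂ : ℝ → ℝ) : ℝ → ℝ := fun x => evenPart f₁ x - evenPart f₂ x

/-- the constant `c = ∫_0^∞ e^{-γx}(k₁(x) + (γ/2) k₂(x)) dx` -/
def cconst (α β : ℝ) (f₁ f₂ : ℝ → ℝ) : ℝ :=
  ∫ x in Ioi (0:ℝ), Real.exp (-(gam α β * x)) * (kone α β f₁ f₂ x + (gam α β / 2) * ktwo f₁ f₂ x)

/-- first coordinate `g₁` of `P_{α,β}(f₁,f₂)` -/
def Pone (α β : ℝ) (f₁ f₂ : ℝ → ℝ) : ℝ → ℝ := fun x =>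
  evenPart f₁ x +
    cconst α β f₁ f₂ * ((2 * α / gam α β) * Real.sinh (gam α β * x) - Real.cosh (gam α β * x)) -
    conv (fun y => (2 * α / gam α β) * kone α β f₁ f₂ y - (gam α β / 2) * ktwo f₁ f₂ y)
      (fun y => Real.sinh (gam α β * y)) x +
    conv (fun y => kone α β f₁ f₂ y - α * ktwo f₁ f₂ y) (fun y => Real.cosh (gam α β * y)) x

/-- second coordinate `g₂` of `P_{α,β}(f₁,f₂)` -/
def Ptwo (α β : ℝ) (f₁ f₂ : ℝ → ℝ) : ℝ → ℝ := fun x =>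
  evenPart f₂ x +
    cconst α β f₁ f₂ * ((2 * β / gam α β) * Real.sinh (gam α β * x) + Real.cosh (gam α β * x)) -
    conv (fun y => (2 * β / gam α β) * kone α β f₁ f₂ y + (gam α β / 2) * ktwo f₁ f₂ y)
      (fun y => Real.sinh (gam α β * y)) x -
    conv (fun y => kone α β f₁ f₂ y + β * ktwo f₁ f₂ y) (fun y => Real.cosh (gam α β * y)) x

/-! ### The space `C[-∞,∞]` -/

lemma Cinf.comp_neg {f : ℝ → ℝ} (h : Cinf f) : Cinf (fun x => f (-x)) := by
  obtain ⟨hc, ⟨L, hL⟩, ⟨M, hM⟩⟩ := h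
  exact ⟨hc.comp continuous_neg, ⟨M, hM.comp tendsto_neg_atTop_atBot⟩,
    ⟨L, hL.comp tendsto_neg_atBot_atTop⟩⟩

lemma Cinf.add {f g : ℝ → ℝ} (hf : Cinf f) (hg : Cinf g) : Cinf (fun x => f x + g x) := by
  obtain ⟨hc, ⟨L, hL⟩, ⟨M, hM⟩⟩ := hf
  obtain ⟨hc', ⟨L', hL'⟩, ⟨M', hM'⟩⟩ := hg
  exact ⟨hc.add hc', ⟨_, hL.add hL'⟩, ⟨_, hM.add hM'⟩⟩

lemma Cinf.const_mul {f : ℝ → ℝ} (hf : Cinf f) (a : ℝ) : Cinf (fun x => a * f x) := by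
  obtain ⟨hc, ⟨L, hL⟩, ⟨M, hM⟩⟩ := hf
  exact ⟨continuous_const.mul hc, ⟨_, hL.const_mul a⟩, ⟨_, hM.const_mul a⟩⟩

lemma Cinf.evenPart {f : ℝ → ℝ} (hf : Cinf f) : Cinf (evenPart f) := by
  have h := (hf.add hf.comp_neg).const_mul (1 / 2)
  convert h using 2
  simp only [_root_.evenPart]; ring

lemma Cinf.oddPart {f : ℝ → ℝ} (hf : Cinf f) : Cinf (oddPart f) := by
  have h := (hf.add (hf.comp_neg.const_mul (-1))).const_mul (1 / 2)
  convert h using 2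
  simp only [_root_.oddPart]; ring

lemma Cinf.exists_bound {f : ℝ → ℝ} (hf : Cinf f) : ∃ M, ∀ x, |f x| ≤ M := by
  obtain ⟨hc, ⟨L, hL⟩, ⟨L', hL'⟩⟩ := hf
  have h1 : ∀ᶠ x in atTop, |f x| < |L| + 1 := hL.abs.eventually_lt_const (by linarith)
  have h2 : ∀ᶠ x in atBot, |f x| < |L'| + 1 := hL'.abs.eventually_lt_const (by linarith)
  obtain ⟨A, hA⟩ := eventually_atTop.1 h1
  obtain ⟨B, hB⟩ := eventually_atBot.1 h2
  obtain ⟨C, hC⟩ := (isCompact_Icc (a := B) (b := A)).exists_bound_of_continuousOn hc.continuousOn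
  refine ⟨max C (max (|L| + 1) (|L'| + 1)), fun x => ?_⟩
  rcases le_total A x with h | h
  · exact (hA x h).le.trans ((le_max_left _ _).trans (le_max_right _ _))
  · rcases le_total x B with h' | h'
    · exact (hB x h').le.trans ((le_max_right _ _).trans (le_max_right _ _))
    · exact (hC x ⟨h', h⟩).trans (le_max_left _ _)

/-! ### The equation `U' = g U - u` -/

/-- The solution of `U' = g U - u` with `U 0 = c`. -/
def Ufun (g c : ℝ) (u : ℝ → ℝ) : ℝ → ℝ := fun x =>
  Real.exp (g * x) * (c - ∫ y in (0:ℝ)..x, Real.exp (-(g * y)) * u y)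

lemma Ufun_zero (g c : ℝ) (u : ℝ → ℝ) : Ufun g c u 0 = c := by simp [Ufun]

lemma hasDerivAt_Ufun (g c : ℝ) {u : ℝ → ℝ} (hu : Continuous u) (x : ℝ) :
    HasDerivAt (Ufun g c u) (g * Ufun g c u x - u x) x := by
  have hcont : Continuous fun y => Real.exp (-(g * y)) * u y := by fun_prop
  have h1 := (hcont.integral_hasStrictDerivAt 0 x).hasDerivAt
  have h2 : HasDerivAt (fun x => Real.exp (g * x)) (Real.exp (g * x) * (g * 1)) x :=
    ((hasDerivAt_id x).const_mul g).exp
  have h3 := h2.mul (h1.const_sub c)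
  refine h3.congr_deriv ?_
  have : Real.exp (g * x) * Real.exp (-(g * x)) = 1 := by
    rw [← Real.exp_add]; simp
  simp only [Ufun]
  linear_combination (-u x) * this

lemma integrableOn_exp_mul {g : ℝ} (hg : 0 < g) {u : ℝ → ℝ} (hu : Cinf u) (a : ℝ) :
    IntegrableOn (fun y => Real.exp (-(g * y)) * u y) (Ioi a) := by
  obtain ⟨M, hM⟩ := hu.exists_bound
  have h : IntegrableOn (fun y => Real.exp (-g * y)) (Ioi a) :=
    integrableOn_exp_mul_Ioi (by linarith) a
  have h' : IntegrableOn (fun y => Real.exp (-(g * y))) (Ioi a) := by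
    simpa only [neg_mul] using h
  exact h'.mul_bdd (c := M) hu.1.aestronglyMeasurable (ae_of_all _ hM)

/-- For the distinguished initial value, `U` is a Laplace-type average of the translates of `u`. -/
lemma Ufun_eq_integral {g : ℝ} (hg : 0 < g) {u : ℝ → ℝ} (hu : Cinf u) (x : ℝ) :
    Ufun g (∫ y in Ioi (0:ℝ), Real.exp (-(g * y)) * u y) u x =
      ∫ t in Ioi (0:ℝ), Real.exp (-(g * t)) * u (x + t) := by
  have h := integral_Ioi_sub_Ioi' (integrableOn_exp_mul hg hu 0) (integrableOn_exp_mul hg hu x)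
  have h2 : (∫ y in Ioi x, Real.exp (-(g * y)) * u y) =
      ∫ t in Ioi (0:ℝ), Real.exp (-(g * (x + t))) * u (x + t) := by
    have := (measurePreserving_add_left volume x).setIntegral_preimage_emb
      (measurableEmbedding_addLeft x) (fun y => Real.exp (-(g * y)) * u y) (Ioi x)
    simpa using this.symm
  simp only [Ufun]
  rw [← h, sub_sub_cancel, h2, ← MeasureTheory.integral_const_mul]
  congr 1
  ext t
  rw [← mul_assoc, ← Real.exp_add]
  congr 2
  ring

lemma cinf_Ufun {g : ℝ} (hg : 0 < g) {u : ℝ → ℝ} (hu : Cinf u) :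
    Cinf (Ufun g (∫ y in Ioi (0:ℝ), Real.exp (-(g * y)) * u y) u) := by
  have hcont : Continuous (Ufun g (∫ y in Ioi (0:ℝ), Real.exp (-(g * y)) * u y) u) :=
    continuous_iff_continuousAt.2 fun x => (hasDerivAt_Ufun g _ hu.1 x).continuousAt
  obtain ⟨M, hM⟩ := hu.exists_bound
  have hexp : IntegrableOn (fun y => Real.exp (-(g * y)) * M) (Ioi 0) :=
    integrableOn_exp_mul hg ⟨continuous_const, ⟨M, tendsto_const_nhds⟩, ⟨M, tendsto_const_nhds⟩⟩ 0
  have key : ∀ (l : Filter ℝ) [l.IsCountablyGenerated] (L : ℝ), Tendsto u l (𝓝 L) →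
      (∀ t, Tendsto (fun x : ℝ => x + t) l l) →
      ∃ K, Tendsto (Ufun g (∫ y in Ioi (0:ℝ), Real.exp (-(g * y)) * u y) u) l (𝓝 K) := by
    intro l _ L hL hl
    refine ⟨∫ t in Ioi (0:ℝ), Real.exp (-(g * t)) * L, ?_⟩
    rw [funext (Ufun_eq_integral hg hu)]
    refine tendsto_integral_filter_of_dominated_convergence _ ?_ ?_ hexp ?_
    · refine Eventually.of_forall fun x => Continuous.aestronglyMeasurable ?_
      have := hu.1
      fun_prop
    · refine Eventually.of_forall fun x => ae_of_all _ fun t => ?_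
      rw [Real.norm_eq_abs, abs_mul, Real.abs_exp]
      exact mul_le_mul_of_nonneg_left (hM _) (Real.exp_pos _).le
    · exact ae_of_all _ fun t => (hL.comp (hl t)).const_mul _
  obtain ⟨-, ⟨L, hL⟩, ⟨L', hL'⟩⟩ := hu
  exact ⟨hcont, key atTop L hL fun t => tendsto_atTop_add_const_right _ t tendsto_id,
    key atBot L' hL' fun t => tendsto_atBot_add_const_right _ t tendsto_id⟩

/-! ### Convolutions with hyperbolic functions -/

lemma conv_comm_integral (f h : ℝ → ℝ) (x : ℝ) :
    conv f h x = ∫ y in (0:ℝ)..x, f y * h (x - y) := by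
  have := intervalIntegral.integral_comp_sub_left (a := 0) (b := x)
    (fun y => f y * h (x - y)) x
  simpa [conv] using this

/-- A convolution with `sinh` or `cosh` (`ε = -1` or `1`), split into exponentials. -/
lemma conv_exp_aux (g p q ε : ℝ) {k l h : ℝ → ℝ} (hk : Continuous k) (hl : Continuous l)
    (hh : ∀ y, h y = (Real.exp (g * y) + ε * Real.exp (-(g * y))) / 2) (x : ℝ) :
    conv (fun y => p * k y + q * l y) h x =
      (Real.exp (g * x) * (p * (∫ y in (0:ℝ)..x, Real.exp (-(g * y)) * k y) +
          q * ∫ y in (0:ℝ)..x, Real.exp (-(g * y)) * l y) +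
        ε * (Real.exp (-(g * x)) * (p * (∫ y in (0:ℝ)..x, Real.exp (g * y) * k y) +
          q * ∫ y in (0:ℝ)..x, Real.exp (g * y) * l y))) / 2 := by
  have i1 : IntervalIntegrable (fun y => Real.exp (-(g * y)) * k y) volume 0 x :=
    Continuous.intervalIntegrable (by fun_prop) _ _
  have i2 : IntervalIntegrable (fun y => Real.exp (-(g * y)) * l y) volume 0 x :=
    Continuous.intervalIntegrable (by fun_prop) _ _
  have i3 : IntervalIntegrable (fun y => Real.exp (g * y) * k y) volume 0 x :=
    Continuous.intervalIntegrable (by fun_prop) _ _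
  have i4 : IntervalIntegrable (fun y => Real.exp (g * y) * l y) volume 0 x :=
    Continuous.intervalIntegrable (by fun_prop) _ _
  have e : ∀ y, (p * k y + q * l y) * h (x - y) =
      (Real.exp (g * x) / 2 * p) * (Real.exp (-(g * y)) * k y) +
      (Real.exp (g * x) / 2 * q) * (Real.exp (-(g * y)) * l y) +
      ((ε * Real.exp (-(g * x)) / 2 * p) * (Real.exp (g * y) * k y) +
      (ε * Real.exp (-(g * x)) / 2 * q) * (Real.exp (g * y) * l y)) := by
    intro y
    have e1 : Real.exp (g * (x - y)) = Real.exp (g * x) * Real.exp (-(g * y)) := by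
      rw [← Real.exp_add]; congr 1; ring
    have e2 : Real.exp (-(g * (x - y))) = Real.exp (-(g * x)) * Real.exp (g * y) := by
      rw [← Real.exp_add]; congr 1; ring
    rw [hh, e1, e2]; ring
  rw [conv_comm_integral]
  simp only [e]
  rw [intervalIntegral.integral_add ((i1.const_mul _).add (i2.const_mul _))
      ((i3.const_mul _).add (i4.const_mul _)),
    intervalIntegral.integral_add (i1.const_mul _) (i2.const_mul _),
    intervalIntegral.integral_add (i3.const_mul _) (i4.const_mul _)]
  simp only [intervalIntegral.integral_const_mul]
  ring

lemma integral_exp_add (a m : ℝ) {k l : ℝ → ℝ} (hk : Continuous k) (hl : Continuous l) (x : ℝ) :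
    (∫ y in (0:ℝ)..x, Real.exp (a * y) * (k y + m * l y)) =
      (∫ y in (0:ℝ)..x, Real.exp (a * y) * k y) +
        m * ∫ y in (0:ℝ)..x, Real.exp (a * y) * l y := by
  have i1 : IntervalIntegrable (fun y => Real.exp (a * y) * k y) volume 0 x :=
    Continuous.intervalIntegrable (by fun_prop) _ _
  have i2 : IntervalIntegrable (fun y => Real.exp (a * y) * l y) volume 0 x :=
    Continuous.intervalIntegrable (by fun_prop) _ _
  rw [← intervalIntegral.integral_const_mul, ← intervalIntegral.integral_add i1 (i2.const_mul _)]
  congr 1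
  ext y
  ring

lemma Ufun_apply (g c m : ℝ) {k l : ℝ → ℝ} (hk : Continuous k) (hl : Continuous l) (x : ℝ) :
    Ufun g c (fun y => k y + m * l y) x = Real.exp (g * x) * (c -
      ((∫ y in (0:ℝ)..x, Real.exp (-(g * y)) * k y) +
        m * ∫ y in (0:ℝ)..x, Real.exp (-(g * y)) * l y)) := by
  have := integral_exp_add (-g) m hk hl x
  simp only [neg_mul] at this
  rw [Ufun, this]

/-- Reflecting the integral uses that `k` is odd and `l` even. -/
lemma Ufun_apply_neg (g c m : ℝ) {k l : ℝ → ℝ} (hk : Continuous k) (hl : Continuous l)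
    (hk' : ∀ x, k (-x) = -k x) (hl' : ∀ x, l (-x) = l x) (x : ℝ) :
    Ufun g c (fun y => k y + m * l y) (-x) = Real.exp (-(g * x)) * (c -
      ((∫ y in (0:ℝ)..x, Real.exp (g * y) * k y) -
        m * ∫ y in (0:ℝ)..x, Real.exp (g * y) * l y)) := by
  have h := integral_exp_add g (-m) hk hl x
  have h2 := intervalIntegral.integral_comp_neg (a := 0) (b := x)
    (fun y => Real.exp (-(g * y)) * (k y + m * l y))
  rw [neg_zero, intervalIntegral.integral_symm 0 (-x)] at h2
  have h3 : ∀ y, Real.exp (-(g * -y)) * (k (-y) + m * l (-y)) =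
      -(Real.exp (g * y) * (k y + -m * l y)) := by
    intro y
    rw [hk', hl', mul_neg, neg_neg]; ring
  simp only [h3] at h2
  rw [intervalIntegral.integral_neg, neg_inj] at h2
  rw [Ufun, ← h2, h, mul_neg]
  ring

/-! ### The operator `P` in terms of `U` -/

lemma gam_sq (α β : ℝ) : gam α β ^ 2 = 2 * (α ^ 2 + β ^ 2) :=
  Real.sq_sqrt (by positivity)

lemma gam_pos {α β : ℝ} (hαβ : 0 < α + β) : 0 < gam α β := by
  refine Real.sqrt_pos.2 ?_
  nlinarith [mul_pos hαβ hαβ, sq_nonneg (α - β)]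

lemma cinf_kone (α β : ℝ) {f₁ f₂ : ℝ → ℝ} (h₁ : Cinf f₁) (h₂ : Cinf f₂) :
    Cinf (kone α β f₁ f₂) :=
  (h₁.oddPart.const_mul α).add (h₂.oddPart.const_mul β)

lemma cinf_ktwo {f₁ f₂ : ℝ → ℝ} (h₁ : Cinf f₁) (h₂ : Cinf f₂) : Cinf (ktwo f₁ f₂) := by
  have h := h₁.evenPart.add (h₂.evenPart.const_mul (-1))
  convert h using 2
  simp only [ktwo]; ring

lemma kone_neg (α β : ℝ) (f₁ f₂ : ℝ → ℝ) (x : ℝ) : kone α β f₁ f₂ (-x) = -kone α β f₁ f₂ x := by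
  simp only [kone, oddPart, neg_neg]; ring

lemma ktwo_neg (f₁ f₂ : ℝ → ℝ) (x : ℝ) : ktwo f₁ f₂ (-x) = ktwo f₁ f₂ x := by
  simp only [ktwo, evenPart, neg_neg]; ring

/-- The function `u = k₁ + (γ/2) k₂` whose Laplace transform at `γ` is the constant `c`. -/
def ufun (α β : ℝ) (f₁ f₂ : ℝ → ℝ) : ℝ → ℝ := fun y =>
  kone α β f₁ f₂ y + (gam α β / 2) * ktwo f₁ f₂ y

/-- The bounded solution of `U' = γ U - u`. -/
def Uab (α β : ℝ) (f₁ f₂ : ℝ → ℝ) : ℝ → ℝ :=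
  Ufun (gam α β) (cconst α β f₁ f₂) (ufun α β f₁ f₂)

lemma sinh_split (g y : ℝ) :
    Real.sinh (g * y) = (Real.exp (g * y) + (-1) * Real.exp (-(g * y))) / 2 := by
  rw [Real.sinh_eq]; ring

lemma cosh_split (g y : ℝ) :
    Real.cosh (g * y) = (Real.exp (g * y) + 1 * Real.exp (-(g * y))) / 2 := by
  rw [Real.cosh_eq]; ring

lemma sub_Pone_eq {α β : ℝ} (hg : 0 < gam α β) {f₁ f₂ : ℝ → ℝ} (h₁ : Cinf f₁) (h₂ : Cinf f₂)
    (x : ℝ) :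
    f₁ x - Pone α β f₁ f₂ x = oddPart f₁ x + evenPart (Uab α β f₁ f₂) x -
      2 * α / gam α β * oddPart (Uab α β f₁ f₂) x := by
  have c1 := (cinf_kone α β h₁ h₂).1
  have c2 := (cinf_ktwo h₁ h₂).1
  have a1 := conv_exp_aux (gam α β) (2 * α / gam α β) (-(gam α β / 2)) (-1) c1 c2
    (sinh_split (gam α β)) x
  have a2 := conv_exp_aux (gam α β) 1 (-α) 1 c1 c2 (cosh_split (gam α β)) x
  have u1 : Ufun _ _ (ufun α β f₁ f₂) x = _ :=
    Ufun_apply (gam α β) (cconst α β f₁ f₂) (gam α β / 2) c1 c2 x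
  have u2 : Ufun _ _ (ufun α β f₁ f₂) (-x) = _ :=
    Ufun_apply_neg (gam α β) (cconst α β f₁ f₂) (gam α β / 2) c1 c2 (kone_neg α β f₁ f₂) (ktwo_neg f₁ f₂) x
  simp only [neg_mul, one_mul, ← sub_eq_add_neg] at a1 a2
  simp only [Pone, Uab, evenPart, oddPart]
  rw [a1, a2, u1, u2, sinh_split, cosh_split]
  field_simp
  ring

lemma sub_Ptwo_eq {α β : ℝ} (hg : 0 < gam α β) {f₁ f₂ : ℝ → ℝ} (h₁ : Cinf f₁) (h₂ : Cinf f₂)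
    (x : ℝ) :
    f₂ x - Ptwo α β f₁ f₂ x = oddPart f₂ x - evenPart (Uab α β f₁ f₂) x -
      2 * β / gam α β * oddPart (Uab α β f₁ f₂) x := by
  have c1 := (cinf_kone α β h₁ h₂).1
  have c2 := (cinf_ktwo h₁ h₂).1
  have a1 := conv_exp_aux (gam α β) (2 * β / gam α β) (gam α β / 2) (-1) c1 c2
    (sinh_split (gam α β)) x
  have a2 := conv_exp_aux (gam α β) 1 β 1 c1 c2 (cosh_split (gam α β)) x
  have u1 : Ufun _ _ (ufun α β f₁ f₂) x = _ :=
    Ufun_apply (gam α β) (cconst α β f₁ f₂) (gam α β / 2) c1 c2 x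
  have u2 : Ufun _ _ (ufun α β f₁ f₂) (-x) = _ :=
    Ufun_apply_neg (gam α β) (cconst α β f₁ f₂) (gam α β / 2) c1 c2 (kone_neg α β f₁ f₂) (ktwo_neg f₁ f₂) x
  simp only [one_mul] at a1 a2
  simp only [Ptwo, Uab, evenPart, oddPart]
  rw [a1, a2, u1, u2, sinh_split, cosh_split]
  field_simp
  ring

/-! ### Variation of constants -/

lemma hasDerivAt_evenPart_Uab (α β : ℝ) {f₁ f₂ : ℝ → ℝ} (h₁ : Cinf f₁) (h₂ : Cinf f₂) (x : ℝ) :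
    HasDerivAt (evenPart (Uab α β f₁ f₂))
      (gam α β * oddPart (Uab α β f₁ f₂) x - kone α β f₁ f₂ x) x := by
  have hu : Continuous (ufun α β f₁ f₂) :=
    ((cinf_kone α β h₁ h₂).add ((cinf_ktwo h₁ h₂).const_mul _)).1
  have hd := hasDerivAt_Ufun (gam α β) (cconst α β f₁ f₂) hu
  have h1 := ((hd x).add ((hd (-x)).comp x (hasDerivAt_neg x))).div_const 2
  refine h1.congr_deriv ?_
  have e1 := kone_neg α β f₁ f₂ x
  have e2 := ktwo_neg f₁ f₂ x
  simp only [oddPart, Uab, ufun, e1, e2]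
  ring

/-- Variation of constants for `E' + s E`. -/
lemma conv_expa_deriv_add (s : ℝ) {E E' : ℝ → ℝ} (hE : ∀ x, HasDerivAt E (E' x) x)
    (hE' : Continuous E') (x : ℝ) :
    conv (expa s) (fun y => -(E' y + s * E y)) x = E 0 * expa s x - E x := by
  have hEc : Continuous E := continuous_iff_continuousAt.2 fun x => (hE x).continuousAt
  have hd : ∀ y ∈ uIcc 0 x, HasDerivAt (fun y => -(Real.exp (-(s * (x - y))) * E y))
      (expa s (x - y) * -(E' y + s * E y)) y := by
    intro y _
    have h1 : HasDerivAt (fun y => -(s * (x - y))) s y := by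
      refine ((((hasDerivAt_id y).const_sub x).const_mul s).neg).congr_deriv ?_
      ring
    refine ((h1.exp.mul (hE y)).neg).congr_deriv ?_
    simp only [expa]; ring
  have hi : IntervalIntegrable (fun y => expa s (x - y) * -(E' y + s * E y)) volume 0 x := by
    refine Continuous.intervalIntegrable ?_ _ _
    simp only [expa]
    fun_prop
  rw [conv, intervalIntegral.integral_eq_sub_of_hasDerivAt hd hi]
  simp only [expa, sub_self, mul_zero, neg_zero, Real.exp_zero, sub_zero]
  ring


/-- `(I - P_{α,β})` maps `𝒞` into `𝒟_{α,β}`. -/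
theorem statement7 (α β : ℝ) (hα : 0 ≤ α) (hβ : 0 ≤ β) (hαβ : 0 < α + β)
    (f₁ f₂ : ℝ → ℝ) (h₁ : Cinf f₁) (h₂ : Cinf f₂) :
    memDab α β (fun x => f₁ x - Pone α β f₁ f₂ x) (fun x => f₂ x - Ptwo α β f₁ f₂ x) := by
  have hg := gam_pos hαβ
  have hk := cinf_kone α β h₁ h₂
  have hU : Cinf (Uab α β f₁ f₂) :=
    cinf_Ufun hg (hk.add ((cinf_ktwo h₁ h₂).const_mul (gam α β / 2)))
  rw [funext (sub_Pone_eq hg h₁ h₂), funext (sub_Ptwo_eq hg h₁ h₂)]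
  have hconv : ∀ x, conv (expa (α + β)) (fun y =>
      β * (oddPart f₂ y - evenPart (Uab α β f₁ f₂) y -
        2 * β / gam α β * oddPart (Uab α β f₁ f₂) y) -
      α * (oddPart f₁ (-y) + evenPart (Uab α β f₁ f₂) (-y) -
        2 * α / gam α β * oddPart (Uab α β f₁ f₂) (-y))) x =
      cconst α β f₁ f₂ * expa (α + β) x - evenPart (Uab α β f₁ f₂) x := by
    intro x
    have h := conv_expa_deriv_add (α + β) (hasDerivAt_evenPart_Uab α β h₁ h₂)
      ((continuous_const.mul hU.oddPart.1).sub hk.1) x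
    have h0 : evenPart (Uab α β f₁ f₂) 0 = cconst α β f₁ f₂ := by
      simp [evenPart, Uab, Ufun_zero]
    rw [h0] at h
    rw [← h]
    congr 1
    ext y
    have hsq := gam_sq α β
    simp only [kone, oddPart, evenPart, neg_neg]
    field_simp
    linear_combination (Uab α β f₁ f₂ y - Uab α β f₁ f₂ (-y)) * hsq
  have h20 : oddPart f₂ 0 - evenPart (Uab α β f₁ f₂) 0 -
      2 * β / gam α β * oddPart (Uab α β f₁ f₂) 0 = -cconst α β f₁ f₂ := by
    simp [oddPart, evenPart, Uab, Ufun_zero]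
  refine ⟨?_, ?_, fun x => ?_, fun x => ?_⟩
  · have h := (h₁.oddPart.add hU.evenPart).add (hU.oddPart.const_mul (-(2 * α / gam α β)))
    convert h using 2
    ring
  · have h := (h₂.oddPart.add (hU.evenPart.const_mul (-1))).add
      (hU.oddPart.const_mul (-(2 * β / gam α β)))
    convert h using 2
    ring
  · beta_reduce
    rw [hconv, h20]
    simp only [oddPart, evenPart, neg_neg]
    ring
  · beta_reduce
    rw [hconv, h20]
    simp only [oddPart, evenPart, neg_neg]
    ring
end
end

section
/- Let a > 0 and let φ : ℝ → ℝ be continuous. The following four conditions are equivalent: (a) φ^e(x) = a·(e_a * φ)(x) + φ(0)·e^{−a x} for all x ≥ 0; (b) φ^e = a·(e_a * φ) + φ(0)·e_a identically on ℝ; (c) the function φ − a·(e_a * φ) − φ(0)·e_a is odd on ℝ; (d) for every t ∈ ℝ, C(t)(a·(e_a * φ) + φ(0)·e_a) = a·(e_a * C(t)φ) + (C(t)φ)(0)·e_a identically on ℝ. -/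
/-!
Put `u = a (e_a * φ) + φ(0) e_a`; it is the solution of `u' = -a u + a φ` with `u(0) = φ(0)`
(`hasDerivAt_sol`). Condition (c) says exactly that `φ` and `u` have the same even part.

The even part of the differential equation reads `(u^o)' = a (φ^e - u^e)`. Under (c) the right side
vanishes, and under (a) it equals `a u^o` on `[0, ∞)`. As `u^o(0) = 0`, in both cases `u^o = 0` on
`[0, ∞)`, hence everywhere, so that `u = u^e`; this gives (b).

For (d), both sides solve `v' = -a v + a C(t)φ`, with values `u^e(t)` and `φ^e(t)` at `0`. Their
difference is therefore `(u^e(t) - φ^e(t)) e_a` (`cosF_sol_sub`), which vanishes for all `t`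
if and only if (c) holds.
-/

open Filter Topology MeasureTheory Set intervalIntegral

noncomputable section

/-- The function `a (e_a * φ) + φ(0) e_a`. -/
def sol (a : ℝ) (φ : ℝ → ℝ) : ℝ → ℝ := fun x => a * conv (expa a) φ x + φ 0 * expa a x

lemma sol_zero (a : ℝ) (φ : ℝ → ℝ) : sol a φ 0 = φ 0 := by
  simp [sol, conv, expa]

/-- The semigroup property of the exponential pulls the `x`-dependence out of the convolution. -/
lemma conv_expa (a : ℝ) (φ : ℝ → ℝ) (x : ℝ) :
    conv (expa a) φ x = Real.exp (-(a * x)) * ∫ y in (0:ℝ)..x, Real.exp (a * y) * φ y := by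
  unfold conv expa
  rw [← intervalIntegral.integral_const_mul]
  congr 1
  funext y
  rw [← mul_assoc, ← Real.exp_add]
  ring_nf

lemma hasDerivAt_sol (a : ℝ) {φ : ℝ → ℝ} (hφ : Continuous φ) (x : ℝ) :
    HasDerivAt (sol a φ) (-a * sol a φ x + a * φ x) x := by
  have hc : Continuous fun y => Real.exp (a * y) * φ y := by fun_prop
  have hG := hc.integral_hasStrictDerivAt 0 x |>.hasDerivAt
  have hE : HasDerivAt (fun x => Real.exp (-(a * x))) (Real.exp (-(a * x)) * -a) x := by
    simpa using (((hasDerivAt_id x).const_mul a).neg).exp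
  have hfun : sol a φ = fun x => Real.exp (-(a * x)) *
      (a * (∫ y in (0:ℝ)..x, Real.exp (a * y) * φ y) + φ 0) := by
    funext z
    simp only [sol, conv_expa, expa]
    ring
  rw [hfun]
  refine HasDerivAt.congr_deriv (hE.mul ((hG.const_mul a).add_const (φ 0))) ?_
  have h1 : Real.exp (-(a * x)) * Real.exp (a * x) = 1 := by
    rw [← Real.exp_add]; simp
  linear_combination (a * φ x) * h1

lemma eq_exp_of_nonneg {c : ℝ} {f : ℝ → ℝ} (hf : ∀ x, 0 ≤ x → HasDerivAt f (c * f x) x)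
    {x : ℝ} (hx : 0 ≤ x) : f x = f 0 * Real.exp (c * x) := by
  have hd : ∀ y, 0 ≤ y → HasDerivAt (fun y => Real.exp (-(c * y)) * f y) 0 y := by
    intro y hy
    have hE : HasDerivAt (fun x => Real.exp (-(c * x))) (Real.exp (-(c * y)) * -c) y := by
      simpa using (((hasDerivAt_id y).const_mul c).neg).exp
    refine HasDerivAt.congr_deriv (hE.mul (hf y hy)) ?_
    ring
  have h := constant_of_has_deriv_right_zero (a := 0) (b := x)
    (fun y hy => (hd y hy.1).continuousAt.continuousWithinAt)
    (fun y hy => (hd y hy.1).hasDerivWithinAt) x ⟨hx, le_rfl⟩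
  have h1 : Real.exp (-(c * x)) * Real.exp (c * x) = 1 := by
    rw [← Real.exp_add]; simp
  simp only [mul_zero, neg_zero, Real.exp_zero, one_mul] at h
  linear_combination (-f x) * h1 + Real.exp (c * x) * h

lemma eq_exp {c : ℝ} {f : ℝ → ℝ} (hf : ∀ x, HasDerivAt f (c * f x) x) (x : ℝ) :
    f x = f 0 * Real.exp (c * x) := by
  rcases le_total 0 x with hx | hx
  · exact eq_exp_of_nonneg (fun y _ => hf y) hx
  · have hr : ∀ y, 0 ≤ y → HasDerivAt (fun y => f (-y)) (-c * f (-y)) y := by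
      intro y _
      refine HasDerivAt.congr_deriv ((hf (-y)).scomp y (hasDerivAt_neg y)) ?_
      simp
    simpa using eq_exp_of_nonneg hr (neg_nonneg.mpr hx)

lemma hasDerivAt_oddPart_sol (a : ℝ) {φ : ℝ → ℝ} (hφ : Continuous φ) (x : ℝ) :
    HasDerivAt (oddPart (sol a φ)) (a * (evenPart φ x - evenPart (sol a φ) x)) x := by
  have h2 := (hasDerivAt_sol a hφ (-x)).scomp x (hasDerivAt_neg x)
  refine HasDerivAt.congr_deriv (((hasDerivAt_sol a hφ x).sub h2).div_const 2) ?_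
  simp only [evenPart, smul_eq_mul]
  ring

/-- If the odd part `o` of `sol a φ` satisfies `o' = c o` on `[0, ∞)`, then `o = 0` because
`o(0) = 0`, and `sol a φ` is even. -/
lemma sol_even {a c : ℝ} {φ : ℝ → ℝ}
    (h : ∀ x, 0 ≤ x → HasDerivAt (oddPart (sol a φ)) (c * oddPart (sol a φ) x) x) (x : ℝ) :
    sol a φ (-x) = sol a φ x := by
  have h0 : ∀ y, 0 ≤ y → oddPart (sol a φ) y = 0 := by
    intro y hy
    rw [eq_exp_of_nonneg h hy]
    simp [oddPart]
  rcases le_total 0 x with hx | hx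
  · have := h0 x hx
    simp only [oddPart] at this
    linarith
  · have := h0 (-x) (neg_nonneg.mpr hx)
    simp only [oddPart, neg_neg] at this
    linarith

/-- The commutator of `C(t)` with `φ ↦ a (e_a * φ) + φ(0) e_a` is a multiple of `e_a`. -/
lemma cosF_sol_sub (a : ℝ) {φ : ℝ → ℝ} (hφ : Continuous φ) (t x : ℝ) :
    cosF t (sol a φ) x - sol a (cosF t φ) x
      = (evenPart (sol a φ) t - evenPart φ t) * Real.exp (-a * x) := by
  have hC : Continuous (cosF t φ) := by unfold cosF; fun_prop
  have hd : ∀ y, HasDerivAt (fun y => cosF t (sol a φ) y - sol a (cosF t φ) y)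
      (-a * (cosF t (sol a φ) y - sol a (cosF t φ) y)) y := by
    intro y
    have h1 := (hasDerivAt_sol a hφ (y + t)).comp_add_const y t
    have h2 := (hasDerivAt_sol a hφ (y - t)).comp_sub_const y t
    refine HasDerivAt.congr_deriv (((h1.add h2).div_const 2).sub (hasDerivAt_sol a hC y)) ?_
    simp only [cosF]
    ring
  rw [eq_exp hd x, sol_zero]
  simp [cosF, evenPart]

/-- four equivalent conditions on a continuous `φ` (even-part version). -/
theorem statement9 (a : ℝ) (ha : 0 < a) (φ : ℝ → ℝ) (hφ : Continuous φ) :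
    List.TFAE
      [ ∀ x : ℝ, 0 ≤ x → evenPart φ x = a * conv (expa a) φ x + φ 0 * expa a x,
        ∀ x : ℝ, evenPart φ x = a * conv (expa a) φ x + φ 0 * expa a x,
        ∀ x : ℝ, (φ (-x) - a * conv (expa a) φ (-x) - φ 0 * expa a (-x)) =
          -(φ x - a * conv (expa a) φ x - φ 0 * expa a x),
        ∀ t x : ℝ, cosF t (fun y => a * conv (expa a) φ y + φ 0 * expa a y) x =
          a * conv (expa a) (cosF t φ) x + (cosF t φ 0) * expa a x ] := by
  change List.TFAE
      [ ∀ x : ℝ, 0 ≤ x → evenPart φ x = sol a φ x,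
        ∀ x : ℝ, evenPart φ x = sol a φ x,
        ∀ x : ℝ, (φ (-x) - a * conv (expa a) φ (-x) - φ 0 * expa a (-x)) =
          -(φ x - a * conv (expa a) φ x - φ 0 * expa a x),
        ∀ t x : ℝ, cosF t (sol a φ) x = sol a (cosF t φ) x ]
  have hc : (∀ x : ℝ, (φ (-x) - a * conv (expa a) φ (-x) - φ 0 * expa a (-x)) =
      -(φ x - a * conv (expa a) φ x - φ 0 * expa a x)) ↔
      ∀ x, evenPart φ x = evenPart (sol a φ) x := by
    refine forall_congr' fun x => ?_
    simp only [evenPart, sol]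
    constructor <;> intro h <;> linarith
  rw [hc]
  tfae_have 2 → 1 := fun h x _ => h x
  tfae_have 1 → 2 := by
    intro h
    have hev : ∀ x, sol a φ (-x) = sol a φ x := by
      refine sol_even (c := a) fun x hx => ?_
      refine HasDerivAt.congr_deriv (hasDerivAt_oddPart_sol a hφ x) ?_
      rw [h x hx]
      simp only [oddPart, evenPart]
      ring
    intro x
    rcases le_total 0 x with hx | hx
    · exact h x hx
    · rw [← hev x, ← h (-x) (neg_nonneg.mpr hx)]
      simp only [evenPart, neg_neg]
      ring
  tfae_have 2 → 3 := by
    intro h x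
    have h1 := h x
    have h2 := h (-x)
    simp only [evenPart, neg_neg] at h1 h2 ⊢
    linarith
  tfae_have 3 → 2 := by
    intro h x
    have hev : ∀ x, sol a φ (-x) = sol a φ x := by
      refine sol_even (c := 0) fun x _ => ?_
      refine HasDerivAt.congr_deriv (hasDerivAt_oddPart_sol a hφ x) ?_
      rw [h x]
      ring
    rw [h x, evenPart, hev x]
    ring
  tfae_have 3 → 4 := by
    intro h t x
    have := cosF_sol_sub a hφ t x
    rwa [h t, sub_self, zero_mul, sub_eq_zero] at this
  tfae_have 4 → 3 := by
    intro h t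
    have := cosF_sol_sub a hφ t 0
    rw [h t 0] at this
    simp only [sub_self, mul_zero, Real.exp_zero, mul_one] at this
    linarith
  tfae_finish
end
end
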